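/- For the β-power divergence with β ≠ 0, −1, if q₁(a) = c·q₀(a) for a constant c > 0, then d_β(q₀, q₁) = ∑_a q₀(a)^{β+1} · [ (c^{β+1} − 1)/(β+1) − (c^β − 1)/β ]. In particular, d_β(q₀,q₁) need not vanish when c ≠ 1 (the β-power divergence is not invariant under policy equivalence): the bracketed factor is strictly positive for every c > 0 with c ≠ 1. -/

import Mathlib

open Finset

/-!
Each term of the β-power divergence is homogeneous of degree `β + 1`, so its value at `(x, c * x)`
is `x ^ (β + 1)` times its value at `(1, c)`, which is the bracketed factor. As a function of its
second argument `y` it vanishes at `y = x` and has derivative `y ^ (β - 1) * (y - x)`, so it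
decreases strictly up to `x` and increases strictly afterwards.
-/

/-- The scalar term of the β-power divergence: for weights `q₀`, `q₁` on a finite type, the paper's
`d_β(q₀, q₁)` is the sum over `a` of `powerDivergence β (q₀ a) (q₁ a)`. At the singular exponents
`β = 0` and `β = -1` the division by zero gives a junk value. -/
noncomputable def powerDivergence (β x y : ℝ) : ℝ :=
  (y ^ (β + 1) / (β + 1) - x * y ^ β / β) - (x ^ (β + 1) / (β + 1) - x ^ (β + 1) / β)

theorem lt_of_deriv_mul_sub_pos {f : ℝ → ℝ} {s : Set ℝ} {a b : ℝ} (hs : Convex ℝ s)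
    (hf : ContinuousOn f s) (hf' : ∀ x ∈ interior s, x ≠ a → 0 < deriv f x * (x - a))
    (ha : a ∈ s) (hb : b ∈ s) (hba : b ≠ a) : f a < f b := by
  rcases hba.lt_or_gt with hlt | hgt
  · have hanti : StrictAntiOn f (s ∩ Set.Iic a) := by
      refine strictAntiOn_of_deriv_neg (hs.inter (convex_Iic a))
        (hf.mono Set.inter_subset_left) fun x hx => ?_
      rw [interior_inter, interior_Iic] at hx
      exact neg_of_mul_pos_left (hf' x hx.1 hx.2.ne) (sub_neg.2 hx.2).le
    exact hanti ⟨hb, hlt.le⟩ ⟨ha, Set.self_mem_Iic⟩ hlt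
  · have hmono : StrictMonoOn f (s ∩ Set.Ici a) := by
      refine strictMonoOn_of_deriv_pos (hs.inter (convex_Ici a))
        (hf.mono Set.inter_subset_left) fun x hx => ?_
      rw [interior_inter, interior_Ici] at hx
      exact pos_of_mul_pos_left (hf' x hx.1 hx.2.ne') (sub_pos.2 hx.2).le
    exact hmono ⟨ha, Set.self_mem_Ici⟩ ⟨hb, hgt.le⟩ hgt

namespace powerDivergence

variable {β x y t : ℝ}

theorem self_eq_zero (hβ1 : β + 1 ≠ 0) (hx : 0 ≤ x) : powerDivergence β x x = 0 := by
  rw [powerDivergence, Real.rpow_add_one' hx hβ1]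
  ring

theorem mul_mul (hβ1 : β + 1 ≠ 0) (ht : 0 ≤ t) (hx : 0 ≤ x) (hy : 0 ≤ y) :
    powerDivergence β (t * x) (t * y) = t ^ (β + 1) * powerDivergence β x y := by
  simp only [powerDivergence, Real.mul_rpow ht hx, Real.mul_rpow ht hy,
    Real.rpow_add_one' ht hβ1]
  ring

theorem one_left (β y : ℝ) :
    powerDivergence β 1 y = (y ^ (β + 1) - 1) / (β + 1) - (y ^ β - 1) / β := by
  rw [powerDivergence, Real.one_rpow]
  ring

theorem hasDerivAt_right (hβ0 : β ≠ 0) (hβ1 : β + 1 ≠ 0) (x : ℝ) (hy : y ≠ 0) :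
    HasDerivAt (powerDivergence β x) (y ^ (β - 1) * (y - x)) y := by
  have hpow : HasDerivAt (fun y : ℝ => y ^ (β + 1) / (β + 1)) (y ^ β) y := by
    simpa [hβ1] using (Real.hasDerivAt_rpow_const (p := β + 1) (.inl hy)).div_const (β + 1)
  have hcross : HasDerivAt (fun y : ℝ => x * y ^ β / β) (x * y ^ (β - 1)) y := by
    simpa [mul_div_assoc, hβ0] using
      ((Real.hasDerivAt_rpow_const (p := β) (.inl hy)).const_mul x).div_const β
  refine ((hpow.sub hcross).sub_const _).congr_deriv ?_
  calc y ^ β - x * y ^ (β - 1) = y ^ (β - 1) * y - x * y ^ (β - 1) := by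
        rw [← Real.rpow_add_one hy, sub_add_cancel]
    _ = y ^ (β - 1) * (y - x) := by ring

theorem pos_of_ne (hβ0 : β ≠ 0) (hβ1 : β + 1 ≠ 0) (hx : 0 < x) (hy : 0 < y) (hyx : y ≠ x) :
    0 < powerDivergence β x y := by
  have hderiv (z : ℝ) (hz : 0 < z) := hasDerivAt_right hβ0 hβ1 x hz.ne'
  rw [← self_eq_zero hβ1 hx.le]
  refine lt_of_deriv_mul_sub_pos (convex_Ioi 0)
    (fun z hz => (hderiv z hz).continuousAt.continuousWithinAt) (fun z hz hzx => ?_) hx hy hyx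
  rw [interior_Ioi] at hz
  rw [(hderiv z hz).deriv, mul_assoc]
  exact mul_pos (Real.rpow_pos_of_pos hz _) (mul_self_pos.2 (sub_ne_zero.2 hzx))

end powerDivergence

/-- the β-power divergence between q₀ and c·q₀ equals
    ∑_a q₀(a)^{β+1} ((c^{β+1}−1)/(β+1) − (c^β−1)/β), and the bracketed factor
    is strictly positive for every c > 0 with c ≠ 1, so the β-power divergence
    is not invariant under policy equivalence. -/
theorem beta_divergence_not_policy_invariant
    {𝒜 : Type*} [Fintype 𝒜] [Nonempty 𝒜]
    (β c : ℝ) (hβ0 : β ≠ 0) (hβ1 : β ≠ -1) (hc : 0 < c)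
    (q₀ : 𝒜 → ℝ) (hq₀ : ∀ a, 0 < q₀ a) :
    ((∑ a, ((c * q₀ a) ^ (β + 1) / (β + 1) - q₀ a * (c * q₀ a) ^ β / β))
        - ∑ a, (q₀ a ^ (β + 1) / (β + 1) - q₀ a ^ (β + 1) / β))
      = (∑ a, q₀ a ^ (β + 1)) *
          ((c ^ (β + 1) - 1) / (β + 1) - (c ^ β - 1) / β)
    ∧ (c ≠ 1 → 0 < (c ^ (β + 1) - 1) / (β + 1) - (c ^ β - 1) / β) := by
  have hβ1' : β + 1 ≠ 0 := mt eq_neg_of_add_eq_zero_left hβ1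
  rw [← powerDivergence.one_left]
  refine ⟨?_, powerDivergence.pos_of_ne hβ0 hβ1' one_pos hc⟩
  rw [← sum_sub_distrib, sum_mul]
  refine sum_congr rfl fun a _ => ?_
  calc powerDivergence β (q₀ a) (c * q₀ a)
      = powerDivergence β (q₀ a * 1) (q₀ a * c) := by rw [mul_one, mul_comm c]
    _ = q₀ a ^ (β + 1) * powerDivergence β 1 c :=
        powerDivergence.mul_mul hβ1' (hq₀ a).le zero_le_one hc.le
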